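/- Let (R^W, x^W) be a Wardrop equilibrium of the routing game (G, Φ). If R^W_p > 0 for some route p, then Φ R^W_q ≥ z̄_q for every route q < p. -/

import Mathlib

/-!
The key fact is `demand_lt_capacity`: if the common flow on a route is strictly below the route
capacity, then every link of the route is uncongested. The last link is uncongested since its
demand equals the flow; an uncongested link supplies its full capacity, so it cannot be what limits
the outflow of the link before it, whose demand must then equal the flow as well. Induction goes
from the end of the route to its start.

Suppose `Φ R_q < z̄_q` with `q < p` and `p` used. Route `q` is then in free flow, so its travel time
is `τ_q^F` (`tau_eq_tauF`). Every route has travel time at least its free-flow time (`tauF_le_tau`). Hence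
`τ_p^F ≤ τ_p ≤ τ_q = τ_q^F < τ_p^F`, a contradiction.

The lower bound `τ_p^F ≤ τ_p` needs care because `tauLink` takes the junk value `0` at jam density.
A jammed link forces zero flow, which by the key fact makes every link uncongested, so no link of a
route is ever jammed in a consistent density vector.
-/

/-!
Selfish routing on a parallel network with supply/demand (CTM) link mechanics.
A parallel network has `N` routes joining a single origin-destination pair;
route `p` has links `0, …, n p − 1` (paper indices `1, …, n_p`).
-/

open Finset

noncomputable section

namespace SelfishRouting

/-- A parallel network with `N` routes; route `p` has `n p` links, each specified
by jam density `xbar`, capacity `fbar`, free-flow speed `v` and length `L`, with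
the critical density `fbar p l / v p l` strictly below the jam density. -/
structure Network (N : ℕ) where
  n : Fin N → ℕ
  n_pos : ∀ p, 0 < n p
  xbar : (p : Fin N) → Fin (n p) → ℝ
  fbar : (p : Fin N) → Fin (n p) → ℝ
  v : (p : Fin N) → Fin (n p) → ℝ
  L : (p : Fin N) → Fin (n p) → ℝ
  xbar_pos : ∀ p l, 0 < xbar p l
  fbar_pos : ∀ p l, 0 < fbar p l
  v_pos : ∀ p l, 0 < v p l
  L_pos : ∀ p l, 0 < L p l
  crit_lt_jam : ∀ p l, fbar p l / v p l < xbar p l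

namespace Network

variable {N : ℕ} (G : Network N)

/-- critical density of link `l` of route `p`. -/
def xc (p : Fin N) (l : Fin (G.n p)) : ℝ := G.fbar p l / G.v p l

/-- congestion-wave speed of link `l` of route `p`. -/
def w (p : Fin N) (l : Fin (G.n p)) : ℝ := G.fbar p l / (G.xbar p l - G.xc p l)

/-- supply function of link `l` of route `p`. -/
def supply (p : Fin N) (l : Fin (G.n p)) (x : ℝ) : ℝ :=
  min (G.fbar p l) (G.w p l * (G.xbar p l - x))

/-- demand function of link `l` of route `p`. -/
def demand (p : Fin N) (l : Fin (G.n p)) (x : ℝ) : ℝ :=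
  min (G.v p l * x) (G.fbar p l)

/-- route capacity `z̄_p = min_{l ∈ p} f̄_l`. -/
def cap (p : Fin N) : ℝ :=
  (Finset.univ : Finset (Fin (G.n p))).inf' ⟨⟨0, G.n_pos p⟩, Finset.mem_univ _⟩ (G.fbar p)

/-- the first link of route `p`. -/
def first (p : Fin N) : Fin (G.n p) := ⟨0, G.n_pos p⟩

/-- flow `f_{0_p}` entering the first link of route `p`, under inflow demand `φ`. -/
def inflow (p : Fin N) (φ : ℝ) (x : Fin (G.n p) → ℝ) : ℝ :=
  min φ (G.supply p (G.first p) (x (G.first p)))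

/-- flow `f_{(l+1)_p}` leaving link `l` of route `p`. -/
def outflow (p : Fin N) (x : Fin (G.n p) → ℝ) (l : Fin (G.n p)) : ℝ :=
  if h : (l : ℕ) + 1 < G.n p then
    min (G.demand p l (x l)) (G.supply p ⟨(l : ℕ) + 1, h⟩ (x ⟨(l : ℕ) + 1, h⟩))
  else G.demand p l (x l)

/-- `x` lies in the box `∏ [0, x̄]`. -/
def InBox (x : ∀ p : Fin N, Fin (G.n p) → ℝ) : Prop :=
  ∀ p l, 0 ≤ x p l ∧ x p l ≤ G.xbar p l

/-- `R` is a routing vector: nonnegative entries summing to one. -/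
def RoutingVector (R : Fin N → ℝ) : Prop :=
  (∀ p, 0 ≤ R p) ∧ ∑ p, R p = 1

/-- `x` is a consistent density vector for routing vector `R` under exogenous flow
`Φ`: on each route all link flows coincide (route `p` gets inflow demand `Φ R_p`). -/
def Consistent (Φ : ℝ) (R : Fin N → ℝ) (x : ∀ p : Fin N, Fin (G.n p) → ℝ) : Prop :=
  G.InBox x ∧ ∀ p l, G.outflow p (x p) l = G.inflow p (Φ * R p) (x p)

/-- a traffic assignment: a routing vector with a consistent density vector. -/
def Assignment (Φ : ℝ) (R : Fin N → ℝ) (x : ∀ p : Fin N, Fin (G.n p) → ℝ) : Prop :=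
  RoutingVector R ∧ G.Consistent Φ R x

/-- an assignment is fully transferring when the (common) flow on each route `p`
equals the full inflow demand `Φ R_p`; otherwise it is partially transferring. -/
def FullyTransferring (Φ : ℝ) (R : Fin N → ℝ) (x : ∀ p : Fin N, Fin (G.n p) → ℝ) : Prop :=
  ∀ p, G.inflow p (Φ * R p) (x p) = Φ * R p

/-- travel time of link `l` of route `p` at density `x` (equal to `L/v` at `x = 0`). -/
def tauLink (p : Fin N) (l : Fin (G.n p)) (x : ℝ) : ℝ :=
  if x = 0 then G.L p l / G.v p l
  else G.L p l * x / min (G.v p l * x) (G.w p l * (G.xbar p l - x))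

/-- travel time of route `p` at the density vector `x`. -/
def tau (p : Fin N) (x : ∀ q : Fin N, Fin (G.n q) → ℝ) : ℝ :=
  ∑ l, G.tauLink p l (x p l)

/-- free-flow travel time `τ_p^F` of route `p`. -/
def tauF (p : Fin N) : ℝ := ∑ l, G.L p l / G.v p l

/-- maximal travel time `τ_p^S` of route `p`, given its bottleneck link `b`. -/
def tauS (p : Fin N) (b : Fin (G.n p)) : ℝ :=
  ∑ l : Fin (G.n p),
    if (l : ℕ) < (b : ℕ) then G.tauLink p l (G.xbar p l - G.cap p / G.w p l)
    else G.L p l / G.v p l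

/-- Wardrop equilibrium: a traffic assignment in which every used route has
minimal travel time. -/
def Wardrop (Φ : ℝ) (R : Fin N → ℝ) (x : ∀ p : Fin N, Fin (G.n p) → ℝ) : Prop :=
  G.Assignment Φ R x ∧ ∀ p, 0 < R p → ∀ q, G.tau p x ≤ G.tau q x

/-- the set `U = {p ≤ k : τ_p^S ≤ τ_j^F for some j ≤ k}`, given the index `k`
and the bottleneck links `b`. -/
def Uset (k : Fin N) (b : ∀ p : Fin N, Fin (G.n p)) : Set (Fin N) :=
  {p | p ≤ k ∧ ∃ j ≤ k, G.tauS p (b p) ≤ G.tauF j}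

/-- social optimum: a traffic assignment respecting the route capacity
constraints and minimizing the total travel time among all such assignments. -/
def SocialOptimum (Φ : ℝ) (R : Fin N → ℝ) (x : ∀ p : Fin N, Fin (G.n p) → ℝ) : Prop :=
  G.Assignment Φ R x ∧ (∀ p, Φ * R p ≤ G.cap p) ∧
  ∀ R' x', G.Assignment Φ R' x' → (∀ p, Φ * R' p ≤ G.cap p) →
    ∑ p, Φ * R p * G.tau p x ≤ ∑ p, Φ * R' p * G.tau p x'

end Network

end SelfishRouting

end

namespace SelfishRouting

namespace Network

variable {N : ℕ} (G : Network N)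

lemma w_mul_gap (p : Fin N) (l : Fin (G.n p)) :
    G.w p l * (G.xbar p l - G.fbar p l / G.v p l) = G.fbar p l := by
  have h := G.crit_lt_jam p l
  have h' : G.xbar p l - G.fbar p l / G.v p l ≠ 0 := by linarith [sub_pos.2 h]
  unfold w xc
  field_simp

lemma w_pos (p : Fin N) (l : Fin (G.n p)) : 0 < G.w p l :=
  div_pos (G.fbar_pos p l) (sub_pos.2 (G.crit_lt_jam p l))

lemma cap_le (p : Fin N) (l : Fin (G.n p)) : G.cap p ≤ G.fbar p l :=
  Finset.inf'_le _ (Finset.mem_univ l)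

lemma cap_pos (p : Fin N) : 0 < G.cap p :=
  (Finset.lt_inf'_iff _).2 fun l _ => G.fbar_pos p l

/-- Below critical density (`v x < f̄`), the congested branch of the fundamental diagram lies
above capacity. -/
lemma fbar_le_congested (p : Fin N) (l : Fin (G.n p)) {y : ℝ}
    (hy : G.v p l * y < G.fbar p l) : G.fbar p l ≤ G.w p l * (G.xbar p l - y) := by
  have hc : y < G.fbar p l / G.v p l := by
    rw [lt_div_iff₀ (G.v_pos p l)]
    linarith
  calc G.fbar p l = G.w p l * (G.xbar p l - G.fbar p l / G.v p l) := (G.w_mul_gap p l).symm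
    _ ≤ G.w p l * (G.xbar p l - y) :=
      mul_le_mul_of_nonneg_left (by linarith) (G.w_pos p l).le

/-- If the common flow `z` of a route is below the route capacity, all its links are strictly
below their critical densities. -/
lemma demand_lt_capacity (p : Fin N) (y : Fin (G.n p) → ℝ) (z : ℝ)
    (hz : ∀ l, G.outflow p y l = z) (hcap : z < G.cap p) (l : Fin (G.n p)) :
    G.v p l * y l < G.fbar p l := by
  have of_demand : ∀ m : Fin (G.n p), G.demand p m (y m) = z → G.v p m * y m < G.fbar p m := by
    intro m hm
    have hf := hcap.trans_le (G.cap_le p m)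
    unfold demand at hm
    rw [← hm] at hf
    exact (min_lt_iff.1 hf).resolve_right (lt_irrefl _)
  -- Induction on the number `k` of links downstream of `l`.
  have key : ∀ k : ℕ, ∀ m : Fin (G.n p), (m : ℕ) + 1 + k = G.n p →
      G.v p m * y m < G.fbar p m := by
    intro k
    induction k with
    | zero =>
      intro m hm
      apply of_demand
      have h := hz m
      rwa [outflow, dif_neg (by omega)] at h
    | succ k ih =>
      intro m hm
      have hlt : (m : ℕ) + 1 < G.n p := by omega
      have hnext := ih ⟨(m : ℕ) + 1, hlt⟩ (by simp only; omega)
      have h := hz m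
      rw [outflow, dif_pos hlt] at h
      have hs : z < G.supply p ⟨(m : ℕ) + 1, hlt⟩ (y ⟨(m : ℕ) + 1, hlt⟩) := by
        rw [supply, min_eq_left (G.fbar_le_congested p _ hnext)]
        exact hcap.trans_le (G.cap_le p _)
      apply of_demand
      rcases min_choice (G.demand p m (y m))
          (G.supply p ⟨(m : ℕ) + 1, hlt⟩ (y ⟨(m : ℕ) + 1, hlt⟩)) with h' | h'
      · rw [← h', h]
      · rw [h'] at h
        exact absurd h hs.ne'
  exact key (G.n p - ((l : ℕ) + 1)) l (by have := l.isLt; omega)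

lemma tau_eq_tauF {Φ : ℝ} {R : Fin N → ℝ} {x : ∀ p : Fin N, Fin (G.n p) → ℝ}
    (hx : G.Consistent Φ R x) (q : Fin N) (hq : Φ * R q < G.cap q) :
    G.tau q x = G.tauF q := by
  refine Finset.sum_congr rfl fun l _ => ?_
  have hlt := G.demand_lt_capacity q (x q) _ (hx.2 q) ((min_le_left _ _).trans_lt hq) l
  have hle := G.fbar_le_congested q l hlt
  have hv := (G.v_pos q l).ne'
  unfold tauLink
  split_ifs with h0
  · rfl
  · rw [min_eq_left (hlt.le.trans hle)]
    field_simp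

/-- In a consistent density vector the common flow of a route is bounded by the supply of each
of its links. -/
lemma inflow_le_supply {Φ : ℝ} {R : Fin N → ℝ} {x : ∀ p : Fin N, Fin (G.n p) → ℝ}
    (hx : G.Consistent Φ R x) (p : Fin N) (l : Fin (G.n p)) :
    G.inflow p (Φ * R p) (x p) ≤ G.supply p l (x p l) := by
  obtain ⟨k, hk⟩ := l
  cases k with
  | zero => exact min_le_right _ _
  | succ k =>
    rw [← hx.2 p ⟨k, by omega⟩, outflow, dif_pos hk]
    exact min_le_right _ _

lemma lt_xbar {Φ : ℝ} {R : Fin N → ℝ} {x : ∀ p : Fin N, Fin (G.n p) → ℝ}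
    (hx : G.Consistent Φ R x) (p : Fin N) (l : Fin (G.n p)) :
    x p l < G.xbar p l := by
  by_contra! hjam
  -- A jammed link has no supply, so the flow is nonpositive and hence below capacity.
  have hz : G.inflow p (Φ * R p) (x p) ≤ 0 :=
    (G.inflow_le_supply hx p l).trans <| (min_le_right _ _).trans <|
      mul_nonpos_of_nonneg_of_nonpos (G.w_pos p l).le (by linarith)
  have hlt := G.demand_lt_capacity p (x p) _ (hx.2 p) (hz.trans_lt (G.cap_pos p)) l
  have hc : x p l < G.fbar p l / G.v p l := by
    rw [lt_div_iff₀ (G.v_pos p l)]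
    linarith
  linarith [G.crit_lt_jam p l]

lemma tauF_le_tau {Φ : ℝ} {R : Fin N → ℝ} {x : ∀ p : Fin N, Fin (G.n p) → ℝ}
    (hx : G.Consistent Φ R x) (p : Fin N) : G.tauF p ≤ G.tau p x := by
  refine Finset.sum_le_sum fun l _ => ?_
  unfold tauLink
  split_ifs with h0
  · exact le_rfl
  · have hpos : 0 < x p l := lt_of_le_of_ne (hx.1 p l).1 (Ne.symm h0)
    have hv := G.v_pos p l
    have hL := G.L_pos p l
    have hvx := mul_pos hv hpos
    have hwx := mul_pos (G.w_pos p l) (sub_pos.2 (G.lt_xbar hx p l))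
    calc G.L p l / G.v p l = G.L p l * x p l / (G.v p l * x p l) := by field_simp
      _ ≤ _ := div_le_div_of_nonneg_left (mul_pos hL hpos).le (lt_min hvx hwx) (min_le_left _ _)

end Network

/-- Lemma 1. At a Wardrop equilibrium `(R, x)` of the routing
game `(G, Φ)`, if route `p` is used then every route `q < p` (i.e. with smaller
free-flow travel time) receives a demand at least its capacity: `Φ R_q ≥ z̄_q`. -/
theorem wardrop_lower_routes_saturated {N : ℕ} (G : Network N)
    (Φ : ℝ) (hΦ : 0 < Φ)
    (b : ∀ p : Fin N, Fin (G.n p))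
    (hb : ∀ p l, l ≠ b p → G.fbar p (b p) < G.fbar p l)
    (hord : ∀ p q : Fin N, p < q → G.tauF p < G.tauF q)
    (R : Fin N → ℝ) (x : ∀ p : Fin N, Fin (G.n p) → ℝ)
    (hW : G.Wardrop Φ R x)
    (p : Fin N) (hp : 0 < R p) :
    ∀ q, q < p → G.cap q ≤ Φ * R q := by
  intro q hqp
  by_contra! hq
  have hx := hW.1.2
  have h1 := G.tauF_le_tau hx p
  have h2 := hW.2 p hp q
  rw [G.tau_eq_tauF hx q hq] at h2
  linarith [hord q p hqp]

end SelfishRouting
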